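/- Let f be an expansive homeomorphism of a compact metric space (M,d) with expansivity constant ξ, where d is self-similar for f with expanding factor λ > 1 and constant ξ. Then for every subset X ⊆ M the limit lim_{ε→0} log cov_ε(X,d)/(−log ε) exists and equals ent(X)/log(λ). -/

import Mathlib

open Filter Topology

/-- Diameter of a set with respect to an arbitrary "metric" `ρ`. -/
noncomputable def rdiam {M : Type*} (ρ : M → M → ℝ) (A : Set M) : ℝ :=
  sSup {r : ℝ | ∃ a ∈ A, ∃ b ∈ A, r = ρ a b}

/-- Minimal cardinality of a finite cover of `X` by sets of `ρ`-diameter `< ε`. -/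
noncomputable def covN {M : Type*} (X : Set M) (ρ : M → M → ℝ) (ε : ℝ) : ℕ :=
  sInf {n : ℕ | ∃ U : Fin n → Set M, X ⊆ (⋃ i, U i) ∧ ∀ i, rdiam ρ (U i) < ε}

/-- `dᶠₙ(x,y) = max_{|k| ≤ n} d(fᵏ x, fᵏ y)`. -/
noncomputable def dFn {M : Type*} [MetricSpace M] (f : Equiv.Perm M) (n : ℕ) (x y : M) : ℝ :=
  sSup {r : ℝ | ∃ k : ℤ, |k| ≤ (n : ℤ) ∧ r = dist ((f ^ k) x) ((f ^ k) y)}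

/-!
As long as the orbits of `x` and `y` stay `ξ`-close, each application of `f` or `f⁻¹` expands the
distance by exactly `λ` in one of the two time directions, so for `s ≤ ξ` the bounds
`dᶠₙ(x, y) ≤ s` and `d(x, y) ≤ s / λⁿ` are equivalent. Hence the covering number of `X` at scale `ξ`
for `dᶠₙ` is *equal* to its covering number at scale `ξ / λⁿ` for `d`. The entropy is therefore the
growth rate of `log cov` along the geometric sequence of scales `ξ / λⁿ`, and since covering numbers
are monotone in the scale, this sequence determines the limit over all scales.
-/

section Asymptotics

theorem monotone_log_natCast : Monotone fun n : ℕ ↦ Real.log n := fun m n h ↦ by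
  rcases m.eq_zero_or_pos with rfl | hm
  · simpa using Real.log_natCast_nonneg n
  · exact Real.log_le_log (by exact_mod_cast hm) (by exact_mod_cast h)

theorem tendsto_comp_div_of_tendsto_div {α β : Type*} {L : Filter α} {L' : Filter β} {l m : ℝ}
    {u v : β → ℝ} (huv : Tendsto (fun b ↦ u b / v b) L' (𝓝 l)) (hv : ∀ᶠ b in L', v b ≠ 0)
    {c : α → β} {g : α → ℝ} (hc : Tendsto c L L')
    (hg : Tendsto (fun a ↦ v (c a) / g a) L (𝓝 m)) :
    Tendsto (fun a ↦ u (c a) / g a) L (𝓝 (l * m)) := by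
  refine ((huv.comp hc).mul hg).congr' ?_
  filter_upwards [hc.eventually hv] with a ha
  exact div_mul_div_cancel₀ ha

theorem tendsto_div_of_monotone_of_tendsto_nat_div {u : ℝ → ℝ} {l : ℝ} (hmono : Monotone u)
    (hu : Tendsto (fun n : ℕ ↦ u n / n) atTop (𝓝 l)) :
    Tendsto (fun t ↦ u t / t) atTop (𝓝 l) := by
  have hcast : ∀ᶠ n : ℕ in atTop, (n : ℝ) ≠ 0 :=
    (eventually_ne_atTop 0).mono fun _ ↦ Nat.cast_ne_zero.mpr
  have hfloor : Tendsto (fun t ↦ u ⌊t⌋₊ / t) atTop (𝓝 (l * 1)) :=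
    tendsto_comp_div_of_tendsto_div hu hcast tendsto_nat_floor_atTop tendsto_nat_floor_div_atTop
  have hceil : Tendsto (fun t ↦ u ⌈t⌉₊ / t) atTop (𝓝 (l * 1)) :=
    tendsto_comp_div_of_tendsto_div hu hcast tendsto_nat_ceil_atTop tendsto_nat_ceil_div_atTop
  rw [mul_one] at hfloor hceil
  refine tendsto_of_tendsto_of_tendsto_of_le_of_le' hfloor hceil ?_ ?_ <;>
    filter_upwards [eventually_ge_atTop 0] with t ht
  · gcongr
    exact hmono (Nat.floor_le ht)
  · gcongr
    exact hmono (Nat.le_ceil t)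

variable {ξ lam : ℝ}

theorem tendsto_logb_div_nhdsGT_zero (hξ : 0 < ξ) (hlam : 1 < lam) :
    Tendsto (fun ε ↦ Real.logb lam (ξ / ε)) (𝓝[>] 0) atTop :=
  (Real.tendsto_logb_atTop hlam).comp (tendsto_inv_nhdsGT_zero.const_mul_atTop hξ)

theorem tendsto_logb_div_div_neg_log_nhdsGT_zero (hξ : ξ ≠ 0) (lam : ℝ) :
    Tendsto (fun ε ↦ Real.logb lam (ξ / ε) / -Real.log ε) (𝓝[>] 0) (𝓝 (1 / Real.log lam)) := by
  have hlog : Tendsto (fun ε ↦ -Real.log ε) (𝓝[>] 0) atTop :=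
    tendsto_neg_atBot_atTop.comp Real.tendsto_log_nhdsGT_zero
  have hlim : Tendsto (fun ε ↦ (Real.log ξ / -Real.log ε + 1) / Real.log lam) (𝓝[>] 0)
      (𝓝 ((0 + 1) / Real.log lam)) :=
    ((hlog.const_div_atTop _).add_const 1).div_const _
  rw [zero_add] at hlim
  refine hlim.congr' ?_
  filter_upwards [hlog.eventually_ne_atTop 0, self_mem_nhdsWithin] with ε hε_log hε
  rw [← Real.log_div_log, Real.log_div hξ (ne_of_gt hε), div_right_comm, sub_eq_add_neg,
    add_div (Real.log ξ), div_self hε_log]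

theorem tendsto_div_neg_log_of_antitoneOn {φ : ℝ → ℝ} {l : ℝ} (hφ : AntitoneOn φ (Set.Ioi 0))
    (hξ : 0 < ξ) (hlam : 1 < lam)
    (hl : Tendsto (fun n : ℕ ↦ φ (ξ / lam ^ n) / n) atTop (𝓝 l)) :
    Tendsto (fun ε ↦ φ ε / -Real.log ε) (𝓝[>] 0) (𝓝 (l / Real.log lam)) := by
  have hlam₀ : 0 < lam := one_pos.trans hlam
  have hmono : Monotone fun t : ℝ ↦ φ (ξ / lam ^ t) := fun s t hst ↦
    hφ (div_pos hξ (Real.rpow_pos_of_pos hlam₀ t)) (div_pos hξ (Real.rpow_pos_of_pos hlam₀ s))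
      (by gcongr; exact hlam.le)
  have hreal : Tendsto (fun t : ℝ ↦ φ (ξ / lam ^ t) / t) atTop (𝓝 l) :=
    tendsto_div_of_monotone_of_tendsto_nat_div hmono (by simpa only [Real.rpow_natCast] using hl)
  have hscale := tendsto_comp_div_of_tendsto_div hreal (eventually_ne_atTop 0)
    (tendsto_logb_div_nhdsGT_zero hξ hlam) (tendsto_logb_div_div_neg_log_nhdsGT_zero hξ.ne' lam)
  rw [mul_one_div] at hscale
  refine hscale.congr' ?_
  filter_upwards [self_mem_nhdsWithin] with ε hε
  rw [Real.rpow_logb hlam₀ hlam.ne' (div_pos hξ hε), div_div_cancel₀ hξ.ne']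

end Asymptotics

section Covering

variable {M : Type*} {ρ : M → M → ℝ} {A : Set M} {C s : ℝ}

theorem rdiam_nonneg (hρ : ∀ a b, 0 ≤ ρ a b) : 0 ≤ rdiam ρ A := by
  refine Real.sSup_nonneg ?_
  rintro _ ⟨a, -, b, -, rfl⟩
  exact hρ a b

theorem rdiam_le (hs : 0 ≤ s) (h : ∀ a ∈ A, ∀ b ∈ A, ρ a b ≤ s) : rdiam ρ A ≤ s := by
  refine Real.sSup_le ?_ hs
  rintro _ ⟨a, ha, b, hb, rfl⟩
  exact h a ha b hb

theorem rdiam_le_iff (hC : ∀ a b, ρ a b ≤ C) (hs : 0 ≤ s) :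
    rdiam ρ A ≤ s ↔ ∀ a ∈ A, ∀ b ∈ A, ρ a b ≤ s := by
  refine ⟨fun h a ha b hb ↦ ?_, rdiam_le hs⟩
  have hbdd : BddAbove {r : ℝ | ∃ a ∈ A, ∃ b ∈ A, r = ρ a b} := by
    refine ⟨C, ?_⟩
    rintro _ ⟨a, -, b, -, rfl⟩
    exact hC a b
  exact (le_csSup hbdd ⟨a, ha, b, hb, rfl⟩).trans h

variable [PseudoMetricSpace M] {X : Set M} {δ ε : ℝ}

theorem dist_le_diam_univ [BoundedSpace M] (x y : M) : dist x y ≤ Metric.diam (Set.univ : Set M) :=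
  Metric.dist_le_diam_of_mem BoundedSpace.bounded_univ (Set.mem_univ x) (Set.mem_univ y)

theorem exists_fin_cover_rdiam_lt (hX : TotallyBounded X) (hε : 0 < ε) :
    ∃ n, ∃ U : Fin n → Set M, X ⊆ ⋃ i, U i ∧ ∀ i, rdiam dist (U i) < ε := by
  obtain ⟨t, ht, hXt⟩ := Metric.totallyBounded_iff.mp hX (ε / 3) (by positivity)
  obtain ⟨n, c, -, rfl⟩ := ht.fin_param
  rw [Set.biUnion_range] at hXt
  refine ⟨n, fun i ↦ Metric.ball (c i) (ε / 3), hXt, fun i ↦ ?_⟩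
  have hdiam : rdiam dist (Metric.ball (c i) (ε / 3)) ≤ 2 * (ε / 3) := by
    refine rdiam_le (by positivity) fun a ha b hb ↦ ?_
    linarith [dist_triangle_right a b (c i), Metric.mem_ball.mp ha, Metric.mem_ball.mp hb]
  linarith

theorem covN_dist_anti (hX : TotallyBounded X) (hδ : 0 < δ) (h : δ ≤ ε) :
    covN X dist ε ≤ covN X dist δ := by
  obtain ⟨U, hXU, hU⟩ := Nat.sInf_mem (exists_fin_cover_rdiam_lt hX hδ)
  exact Nat.sInf_le ⟨U, hXU, fun i ↦ (hU i).trans_le h⟩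

theorem antitoneOn_log_covN_dist (hX : TotallyBounded X) :
    AntitoneOn (fun ε ↦ Real.log (covN X dist ε)) (Set.Ioi 0) := fun _ hδ _ _ h ↦
  monotone_log_natCast (covN_dist_anti hX hδ h)

end Covering

section SelfSimilar

variable {M : Type*} [PseudoMetricSpace M] {f : Equiv.Perm M} {ξ lam : ℝ} {x y : M}

/-- The metric is self-similar for `f` with expanding factor `lam` at distances at most `ξ`: one of
`f`, `f⁻¹` expands such a distance by exactly `lam`, and neither expands it by more. -/
def IsSelfSimilar (f : Equiv.Perm M) (ξ lam : ℝ) : Prop :=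
  ∀ p q : M, dist p q ≤ ξ →
    max (dist (f p) (f q)) (dist (f.symm p) (f.symm q)) = lam * dist p q

theorem IsSelfSimilar.max_dist_zpow (hf : IsSelfSimilar f ξ lam) {k : ℤ}
    (h : dist ((f ^ k) x) ((f ^ k) y) ≤ ξ) :
    max (dist ((f ^ (k + 1)) x) ((f ^ (k + 1)) y)) (dist ((f ^ (k - 1)) x) ((f ^ (k - 1)) y)) =
      lam * dist ((f ^ k) x) ((f ^ k) y) := by
  rw [zpow_add_one, zpow_sub_one, ← (Commute.self_zpow f k).eq,
    ← (Commute.self_zpow f k).inv_left.eq]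
  exact hf _ _ h

end SelfSimilar

section DynamicalMetric

variable {M : Type*} [MetricSpace M] {f : Equiv.Perm M} {ξ lam s : ℝ} {x y : M} {A : Set M}

theorem dFn_nonneg (n : ℕ) : 0 ≤ dFn f n x y := by
  refine Real.sSup_nonneg ?_
  rintro _ ⟨k, -, rfl⟩
  exact dist_nonneg

theorem dFn_zero : dFn f 0 x y = dist x y := by
  simp [dFn]

theorem dFn_le {n : ℕ} (h : ∀ k : ℤ, |k| ≤ n → dist ((f ^ k) x) ((f ^ k) y) ≤ s) :
    dFn f n x y ≤ s := by
  refine csSup_le ⟨_, 0, by simp, rfl⟩ ?_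
  rintro _ ⟨k, hk, rfl⟩
  exact h k hk

variable [BoundedSpace M]

theorem dFn_le_diam_univ (n : ℕ) (x y : M) : dFn f n x y ≤ Metric.diam (Set.univ : Set M) :=
  dFn_le fun k _ ↦ dist_le_diam_univ ((f ^ k) x) ((f ^ k) y)

theorem dist_zpow_le_dFn {n : ℕ} {k : ℤ} (hk : |k| ≤ n) :
    dist ((f ^ k) x) ((f ^ k) y) ≤ dFn f n x y := by
  refine le_csSup ⟨Metric.diam (Set.univ : Set M), ?_⟩ ⟨k, hk, rfl⟩
  rintro _ ⟨j, -, rfl⟩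
  exact dist_le_diam_univ _ _

namespace IsSelfSimilar

theorem dFn_le_div_of_dFn_succ_le (hf : IsSelfSimilar f ξ lam) (hlam : 0 < lam) (hsξ : s ≤ ξ)
    {n : ℕ} (h : dFn f (n + 1) x y ≤ s) : dFn f n x y ≤ s / lam := by
  have hdist (k : ℤ) (hk : |k| ≤ n + 1) : dist ((f ^ k) x) ((f ^ k) y) ≤ s :=
    (dist_zpow_le_dFn (by exact_mod_cast hk)).trans h
  refine dFn_le fun k hk ↦ ?_
  rw [abs_le] at hk
  rw [le_div_iff₀' hlam, ← hf.max_dist_zpow ((hdist k (abs_le.mpr (by lia))).trans hsξ)]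
  exact max_le (hdist (k + 1) (abs_le.mpr (by lia))) (hdist (k - 1) (abs_le.mpr (by lia)))

theorem dFn_succ_le_of_dFn_le_div (hf : IsSelfSimilar f ξ lam) (hlam : 1 ≤ lam) (hs : 0 ≤ s)
    (hsξ : s ≤ ξ) {n : ℕ} (h : dFn f n x y ≤ s / lam) : dFn f (n + 1) x y ≤ s := by
  have hdiv : s / lam ≤ s := div_le_self hs hlam
  have hdist (k : ℤ) (hk : |k| ≤ n) : dist ((f ^ k) x) ((f ^ k) y) ≤ s / lam :=
    (dist_zpow_le_dFn hk).trans h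
  have hmax (k : ℤ) (hk : |k| ≤ n) : max (dist ((f ^ (k + 1)) x) ((f ^ (k + 1)) y))
      (dist ((f ^ (k - 1)) x) ((f ^ (k - 1)) y)) ≤ s := by
    rw [hf.max_dist_zpow ((hdist k hk).trans (hdiv.trans hsξ)),
      ← le_div_iff₀' (one_pos.trans_le hlam)]
    exact hdist k hk
  refine dFn_le fun k hk ↦ ?_
  rw [abs_le] at hk
  rcases lt_trichotomy k 0 with hneg | rfl | hpos
  · simpa using (le_max_right _ _).trans (hmax (k + 1) (abs_le.mpr (by lia)))
  · exact (hdist 0 (by simp)).trans hdiv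
  · simpa using (le_max_left _ _).trans (hmax (k - 1) (abs_le.mpr (by lia)))

theorem dFn_le_iff (hf : IsSelfSimilar f ξ lam) (hlam : 1 ≤ lam) (hs : 0 ≤ s) (hsξ : s ≤ ξ)
    (n : ℕ) : dFn f n x y ≤ s ↔ dist x y ≤ s / lam ^ n := by
  have hlam₀ : 0 < lam := one_pos.trans_le hlam
  induction n generalizing s with
  | zero => rw [dFn_zero, pow_zero, div_one]
  | succ n ih =>
    calc dFn f (n + 1) x y ≤ s ↔ dFn f n x y ≤ s / lam :=
          ⟨hf.dFn_le_div_of_dFn_succ_le hlam₀ hsξ, hf.dFn_succ_le_of_dFn_le_div hlam hs hsξ⟩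
      _ ↔ dist x y ≤ s / lam / lam ^ n := ih (by positivity) ((div_le_self hs hlam).trans hsξ)
      _ ↔ dist x y ≤ s / lam ^ (n + 1) := by rw [div_div, pow_succ']

theorem rdiam_dFn_le_iff (hf : IsSelfSimilar f ξ lam) (hlam : 1 ≤ lam) (hs : 0 ≤ s) (hsξ : s ≤ ξ)
    (n : ℕ) : rdiam (dFn f n) A ≤ s ↔ rdiam dist A ≤ s / lam ^ n := by
  rw [rdiam_le_iff (dFn_le_diam_univ n) hs, rdiam_le_iff dist_le_diam_univ (by positivity)]
  simp only [hf.dFn_le_iff hlam hs hsξ]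

theorem rdiam_dFn_lt_iff (hf : IsSelfSimilar f ξ lam) (hlam : 1 ≤ lam) (n : ℕ) :
    rdiam (dFn f n) A < ξ ↔ rdiam dist A < ξ / lam ^ n := by
  have hpow : 0 < lam ^ n := pow_pos (one_pos.trans_le hlam) n
  refine ⟨fun h ↦ ?_, fun h ↦ ?_⟩
  · calc rdiam dist A ≤ rdiam (dFn f n) A / lam ^ n :=
          (hf.rdiam_dFn_le_iff hlam (rdiam_nonneg fun _ _ ↦ dFn_nonneg n) h.le n).mp le_rfl
      _ < ξ / lam ^ n := by gcongr
  · have hlt : rdiam dist A * lam ^ n < ξ := (lt_div_iff₀ hpow).mp h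
    have hnonneg : 0 ≤ rdiam dist A * lam ^ n :=
      mul_nonneg (rdiam_nonneg fun _ _ ↦ dist_nonneg) hpow.le
    refine ((hf.rdiam_dFn_le_iff hlam hnonneg hlt.le n).mpr ?_).trans_lt hlt
    rw [mul_div_cancel_right₀ _ hpow.ne']

theorem covN_dFn (hf : IsSelfSimilar f ξ lam) (hlam : 1 ≤ lam) (X : Set M) (n : ℕ) :
    covN X (dFn f n) ξ = covN X dist (ξ / lam ^ n) := by
  simp only [covN, hf.rdiam_dFn_lt_iff hlam]

end IsSelfSimilar

end DynamicalMetric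

theorem stmt_12_general {M : Type*} [MetricSpace M] [BoundedSpace M] {f : Equiv.Perm M}
    {ξ lam : ℝ} (hξ : 0 < ξ) (hlam : 1 < lam) (hf : IsSelfSimilar f ξ lam) {X : Set M}
    (hX : TotallyBounded X) {E : ℝ}
    (hE : Tendsto (fun n : ℕ ↦ Real.log (covN X (dFn f n) ξ) / n) atTop (𝓝 E)) :
    Tendsto (fun ε ↦ Real.log (covN X dist ε) / -Real.log ε) (𝓝[>] 0) (𝓝 (E / Real.log lam)) := by
  simp only [hf.covN_dFn hlam.le] at hE
  exact tendsto_div_neg_log_of_antitoneOn (antitoneOn_log_covN_dist hX) hξ hlam hE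

theorem stmt_12 {M : Type*} [MetricSpace M] [CompactSpace M]
    (f : Equiv.Perm M) (hf : Continuous f) (hf' : Continuous f.symm)
    (ξ lam : ℝ) (hξ : 0 < ξ) (hlam : 1 < lam)
    (hexp : ∀ x y : M, x ≠ y → ∃ n : ℤ, ξ < dist ((f ^ n) x) ((f ^ n) y))
    (hss : ∀ p q : M, dist p q ≤ ξ →
      max (dist (f p) (f q)) (dist (f.symm p) (f.symm q)) = lam * dist p q)
    (X : Set M) (E : ℝ)
    (hE : Tendsto (fun n : ℕ =>
        Real.log ((covN X (dFn f n) ξ : ℕ) : ℝ) / (n : ℝ)) atTop (𝓝 E)) :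
    Tendsto (fun ε : ℝ =>
        Real.log ((covN X (fun a b => dist a b) ε : ℕ) : ℝ) / (- Real.log ε))
      (𝓝[>] (0 : ℝ)) (𝓝 (E / Real.log lam)) :=
  stmt_12_general hξ hlam hss (isCompact_univ.totallyBounded.subset (Set.subset_univ X)) hE
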